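/- Let L ≥ 1 and 0 < P_I ≤ P_s be real numbers and z > 0 a real number. Set b := P_s − P_I + L·P_I + L·(P_I + P_s)·z and D := b² − 4·L²·P_I·P_s·z·(z+1). Then D ≥ 0, and the number S := (b − √D)/(2·L·P_I·P_s·z) satisfies the quadratic equation L·P_I·P_s·z·S² − b·S + L·(1 + z) = 0. Moreover, if P_I = P_s, then S = 1/P_s. -/

import Mathlib

/-!
The quadratic takes the values `(P_I - P_s) / P_I` and `(L - 1) * (P_s - P_I) / P_s` at the
S-transforms `1 / P_I` and `1 / P_s` of the two single masses. Their product is nonpositive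
because `L ≥ 1`, so the discriminant is nonnegative. When the masses coincide at `P`
the discriminant is the square of `L * P`, which is positive, so it is the root with the minus sign
that is `1 / P`.
-/

theorem discrim_nonneg_of_mul_nonpos {K : Type*} [Field K] [LinearOrder K] [IsStrictOrderedRing K]
    {a b c x y : K}
    (h : (a * x ^ 2 + b * x + c) * (a * y ^ 2 + b * y + c) ≤ 0) : 0 ≤ discrim a b c := by
  by_contra! hneg
  have four_a_mul_pos (t : K) : 0 < 4 * a * (a * t ^ 2 + b * t + c) := by
    have complete_square : 4 * a * (a * t ^ 2 + b * t + c) =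
        (2 * a * t + b) ^ 2 - discrim a b c := by
      rw [discrim]
      ring
    rw [complete_square]
    linarith [sq_nonneg (2 * a * t + b)]
  have product_pos := mul_pos (four_a_mul_pos x) (four_a_mul_pos y)
  rw [mul_mul_mul_comm] at product_pos
  exact product_pos.not_ge (mul_nonpos_of_nonneg_of_nonpos (mul_self_nonneg _) h)

theorem quadratic_eq_zero_of_eq_neg_sub_sqrt_discrim_div {a b c x : ℝ} (ha : a ≠ 0)
    (hD : 0 ≤ discrim a b c) (hx : x = (-b - √(discrim a b c)) / (2 * a)) :
    a * x ^ 2 + b * x + c = 0 := by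
  rw [sq]
  exact (quadratic_eq_zero_iff ha (Real.mul_self_sqrt hD).symm x).2 (Or.inr hx)

/-- The coefficient `b` of the quadratic `L * P_I * P_s * z * S ^ 2 - b * S + L * (1 + z)` satisfied
by the S-transform of the distribution with mass `1 / L` at `P_s` and mass `(L - 1) / L` at `P_I`.
As `b` enters with a minus sign, the discriminant is
`discrim (L * P_I * P_s * z) (-b) (L * (1 + z))`. -/
def twoMassCoeff {R : Type*} [CommRing R] (L P_I P_s z : R) : R :=
  P_s - P_I + L * P_I + L * (P_I + P_s) * z

section TwoMass

theorem discrim_twoMass {R : Type*} [CommRing R] (L P_I P_s z : R) :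
    discrim (L * P_I * P_s * z) (-twoMassCoeff L P_I P_s z) (L * (1 + z)) =
      twoMassCoeff L P_I P_s z ^ 2 - 4 * L ^ 2 * P_I * P_s * z * (z + 1) := by
  rw [discrim]
  ring

theorem discrim_twoMass_self {R : Type*} [CommRing R] (L P z : R) :
    discrim (L * P * P * z) (-twoMassCoeff L P P z) (L * (1 + z)) = (L * P) ^ 2 := by
  rw [discrim, twoMassCoeff]
  ring

variable {K : Type*} [Field K]

theorem twoMass_quadratic_inv_left (L P_s z : K) {P_I : K} (hPI : P_I ≠ 0) :
    L * P_I * P_s * z * P_I⁻¹ ^ 2 + -twoMassCoeff L P_I P_s z * P_I⁻¹ + L * (1 + z) =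
      (P_I - P_s) / P_I := by
  rw [twoMassCoeff]
  field_simp
  ring

theorem twoMass_quadratic_inv_right (L P_I z : K) {P_s : K} (hPs : P_s ≠ 0) :
    L * P_I * P_s * z * P_s⁻¹ ^ 2 + -twoMassCoeff L P_I P_s z * P_s⁻¹ + L * (1 + z) =
      (L - 1) * (P_s - P_I) / P_s := by
  rw [twoMassCoeff]
  field_simp
  ring

theorem discrim_twoMass_nonneg [LinearOrder K] [IsStrictOrderedRing K] {L P_I P_s : K} (z : K)
    (hL : 1 ≤ L) (hP : 0 < P_I * P_s) :
    0 ≤ discrim (L * P_I * P_s * z) (-twoMassCoeff L P_I P_s z) (L * (1 + z)) := by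
  apply discrim_nonneg_of_mul_nonpos (x := P_I⁻¹) (y := P_s⁻¹)
  rw [twoMass_quadratic_inv_left L P_s z (left_ne_zero_of_mul hP.ne'),
    twoMass_quadratic_inv_right L P_I z (right_ne_zero_of_mul hP.ne')]
  calc (P_I - P_s) / P_I * ((L - 1) * (P_s - P_I) / P_s)
      = -((L - 1) * (P_s - P_I) ^ 2 / (P_I * P_s)) := by ring
    _ ≤ 0 := neg_nonpos.2 <|
      div_nonneg (mul_nonneg (sub_nonneg.2 hL) (sq_nonneg _)) hP.le

theorem twoMass_minus_root_self {L P z : ℝ} (hL : 0 < L) (hP : 0 < P) (hz : z ≠ 0) :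
    (twoMassCoeff L P P z -
        √(discrim (L * P * P * z) (-twoMassCoeff L P P z) (L * (1 + z)))) /
      (2 * L * P * P * z) = 1 / P := by
  rw [discrim_twoMass_self, Real.sqrt_sq (mul_pos hL hP).le, twoMassCoeff]
  field_simp
  ring

end TwoMass

theorem stmt_7_general (L P_I P_s z : ℝ) (hL : 1 ≤ L) (hPI : 0 < P_I) (hPs : 0 < P_s)
    (hz : z ≠ 0) :
    letI b : ℝ := P_s - P_I + L * P_I + L * (P_I + P_s) * z
    letI D : ℝ := b ^ 2 - 4 * L ^ 2 * P_I * P_s * z * (z + 1)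
    letI S : ℝ := (b - Real.sqrt D) / (2 * L * P_I * P_s * z)
    0 ≤ D ∧
      L * P_I * P_s * z * S ^ 2 - b * S + L * (1 + z) = 0 ∧
      (P_I = P_s → S = 1 / P_s) := by
  have hL₀ : 0 < L := one_pos.trans_le hL
  have leading_ne_zero : L * P_I * P_s * z ≠ 0 := by positivity
  have discrim_nonneg := discrim_twoMass_nonneg z hL (mul_pos hPI hPs)
  simp only [← twoMassCoeff.eq_def, ← discrim_twoMass]
  refine ⟨discrim_nonneg, ?_, ?_⟩
  · rw [sub_eq_add_neg, ← neg_mul]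
    apply quadratic_eq_zero_of_eq_neg_sub_sqrt_discrim_div leading_ne_zero discrim_nonneg
    simp only [neg_neg, mul_assoc]
  · rintro rfl
    exact twoMass_minus_root_self hL₀ hPI hz

/-- Equations (29)–(30): the minus-sign root of the quadratic satisfied by the
S-transform of the two-mass power distribution, with the branch check that a single
mass P_s gives S = 1/P_s. -/
theorem stmt_7 (L P_I P_s z : ℝ) (hL : 1 ≤ L) (hPI : 0 < P_I) (hPIs : P_I ≤ P_s)
    (hz : 0 < z) :
    letI b : ℝ := P_s - P_I + L * P_I + L * (P_I + P_s) * z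
    letI D : ℝ := b ^ 2 - 4 * L ^ 2 * P_I * P_s * z * (z + 1)
    letI S : ℝ := (b - Real.sqrt D) / (2 * L * P_I * P_s * z)
    0 ≤ D ∧
      L * P_I * P_s * z * S ^ 2 - b * S + L * (1 + z) = 0 ∧
      (P_I = P_s → S = 1 / P_s) :=
  stmt_7_general L P_I P_s z hL hPI (hPI.trans_le hPIs) hz.ne'
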